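/- arXiv:2210.16603 — 2 statements merged into one kernel-verified Lean document; each statement's English description precedes it below -/
import Mathlib

section
/- The 4-dimensional spined cube SQ_4 is not vertex-transitive. -/
/-- The "difference vector" of the neighbor rules of the spined cube, `i` being the
0-based index of the flipped bit. -/
def sqDelta (n : ℕ) (x : Fin n → ZMod 2) (i : Fin n) : Fin n → ZMod 2 :=
  fun j =>
    (if j = i then 1 else 0) +
    (if i.val + 5 ≤ n then
      (if j.val = i.val + 1 then x ⟨n - 2, by have := i.isLt; omega⟩ else 0) +
      (if j.val = i.val + 2 then x ⟨n - 1, by have := i.isLt; omega⟩ else 0)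
    else if n ≤ i.val + 2 then 0
    else (if j.val = i.val + 1 then x ⟨n - 1, by have := i.isLt; omega⟩ else 0))

/-- The `n`-dimensional spined cube `SQ_n`. -/
def spinedCube (n : ℕ) : SimpleGraph (Fin n → ZMod 2) :=
  SimpleGraph.fromRel (fun x y => ∃ i : Fin n, y = x + sqDelta n x i)
/-- Number of walks of length `k` from `u` to `v`. -/
noncomputable def walkCount {V : Type*} [Fintype V] (G : SimpleGraph V) : ℕ → V → V → ℕ
  | 0, u, v => by classical exact if u = v then 1 else 0
  | k + 1, u, v => by classical exact ∑ z, if G.Adj u z then walkCount G k z v else 0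

theorem walkCount_iso {V : Type*} [Fintype V] (G : SimpleGraph V) (e : G ≃g G) (k : ℕ) (u v : V) :
    walkCount G k (e u) (e v) = walkCount G k u v := by
  induction k generalizing u with
  | zero =>
    have h : e u = e v ↔ u = v := e.injective.eq_iff
    by_cases huv : u = v
    · simp [walkCount, huv]
    · simp [walkCount, huv, mt h.1 huv]
  | succ k ih =>
    simp only [walkCount]
    rw [← Equiv.sum_comp e.toEquiv]
    refine Finset.sum_congr rfl fun z _ => ?_
    have h : G.Adj (e u) (e.toEquiv z) ↔ G.Adj u z := e.map_rel_iff
    by_cases hz : G.Adj u z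
    · rw [if_pos hz, if_pos (h.2 hz)]
      exact ih z
    · rw [if_neg hz, if_neg (mt h.1 hz)]

/-- The `i`-th neighbour in `SQ_4`. -/
def sqNb (x : Fin 4 → ZMod 2) (i : Fin 4) : Fin 4 → ZMod 2 := x + sqDelta 4 x i

theorem sqNb_inj : ∀ x, Function.Injective (sqNb x) := by
  have h : ∀ x : Fin 4 → ZMod 2, ∀ i j, sqNb x i = sqNb x j → i = j := by decide +kernel
  exact fun x i j hij => h x i j hij

theorem sq_adj_iff (x y : Fin 4 → ZMod 2) : (spinedCube 4).Adj x y ↔ ∃ i, sqNb x i = y := by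
  have h1 : ∀ x : Fin 4 → ZMod 2, ∀ i, ∃ j, sqNb (sqNb x i) j = x := by decide +kernel
  have h2 : ∀ x : Fin 4 → ZMod 2, ∀ i, x ≠ sqNb x i := by decide +kernel
  rw [spinedCube, SimpleGraph.fromRel_adj]
  constructor
  · rintro ⟨-, ⟨i, rfl⟩ | ⟨i, rfl⟩⟩
    · exact ⟨i, rfl⟩
    · exact h1 y i
  · rintro ⟨i, rfl⟩
    exact ⟨h2 x i, Or.inl ⟨i, rfl⟩⟩

/-- Computable walk count in `SQ_4`. -/
def sqCount : ℕ → (Fin 4 → ZMod 2) → (Fin 4 → ZMod 2) → ℕ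
  | 0, u, v => if u = v then 1 else 0
  | k + 1, u, v => sqCount k (sqNb u 0) v + sqCount k (sqNb u 1) v
      + sqCount k (sqNb u 2) v + sqCount k (sqNb u 3) v

theorem walkCount_sq (k : ℕ) (u v : Fin 4 → ZMod 2) :
    walkCount (spinedCube 4) k u v = sqCount k u v := by
  classical
  induction k generalizing u with
  | zero => simp [walkCount, sqCount]
  | succ k ih =>
    simp only [walkCount, sqCount, ih]
    rw [← Finset.sum_filter]
    have h : (Finset.univ.filter fun z => (spinedCube 4).Adj u z)
        = Finset.univ.image (sqNb u) := by
      ext z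
      simp [sq_adj_iff]
    rw [h, Finset.sum_image fun i _ j _ hij => sqNb_inj u hij, Fin.sum_univ_four]

/-- The 4-dimensional spined cube `SQ_4` is not vertex-transitive. -/
theorem sq4_not_vertexTransitive :
    ¬ ∀ u v : Fin 4 → ZMod 2, ∃ e : spinedCube 4 ≃g spinedCube 4, e u = v := by
  intro h
  obtain ⟨e, he⟩ := h ![0, 0, 0, 0] ![0, 0, 0, 1]
  have h1 := walkCount_iso (spinedCube 4) e 5 ![0, 0, 0, 0] ![0, 0, 0, 0]
  rw [he, walkCount_sq, walkCount_sq] at h1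
  have h2 : sqCount 5 ![0, 0, 0, 1] ![0, 0, 0, 1] ≠ sqCount 5 ![0, 0, 0, 0] ![0, 0, 0, 0] := by
    decide +kernel
  exact h2 h1
end

section
/- For n ≥ 6, the spined cube SQ_n is not vertex-transitive. -/
/-- The difference vector with natural number indices, depending only on the last two bits. -/
def dvec (n : ℕ) (a b : ZMod 2) (i j : ℕ) : ZMod 2 :=
  (if j = i then 1 else 0) +
    (if i + 5 ≤ n then
      (if j = i + 1 then a else 0) + (if j = i + 2 then b else 0)
    else if n ≤ i + 2 then 0
    else (if j = i + 1 then b else 0))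

theorem sqDelta_eq (N : ℕ) (x : Fin (N+6) → ZMod 2) (i j : Fin (N+6)) :
    sqDelta (N+6) x i j = dvec (N+6) (x ⟨N+4, by omega⟩) (x ⟨N+5, by omega⟩) i j := by
  simp only [sqDelta, dvec, Fin.ext_iff]
  rfl

theorem dvec_last (N : ℕ) (a b : ZMod 2) (i : ℕ) (hi : i < N + 6) :
    dvec (N+6) a b i (N+5) = if i = N + 5 then 1 else 0 := by
  unfold dvec
  grind

theorem dvec_a (N : ℕ) (a b : ZMod 2) (i : ℕ) (hi : i < N + 6) :
    dvec (N+6) a b i (N+4) = if i = N + 4 then 1 else if i = N + 3 then b else 0 := by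
  unfold dvec
  grind

theorem dvec_self (n : ℕ) (a b : ZMod 2) (i : ℕ) : dvec n a b i i = 1 := by
  unfold dvec
  grind

theorem dvec_lt (n : ℕ) (a b : ZMod 2) (i j : ℕ) (h : j < i) : dvec n a b i j = 0 := by
  unfold dvec
  grind

theorem sqDelta_symm (N : ℕ) (x : Fin (N+6) → ZMod 2) (i : Fin (N+6)) :
    sqDelta (N+6) (x + sqDelta (N+6) x i) i = sqDelta (N+6) x i := by
  funext j
  have hi := i.isLt
  simp only [sqDelta_eq, Pi.add_apply, dvec_last N _ _ _ hi, dvec_a N _ _ _ hi]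
  unfold dvec
  grind

theorem add_self_z (N : ℕ) (x : Fin N → ZMod 2) : x + x = 0 := by
  funext j
  exact CharTwo.add_self_eq_zero _

theorem sq_add_add (N : ℕ) (x : Fin (N+6) → ZMod 2) (i : Fin (N+6)) :
    x + sqDelta (N+6) x i + sqDelta (N+6) (x + sqDelta (N+6) x i) i = x := by
  rw [sqDelta_symm, add_assoc, add_self_z, add_zero]

theorem adj_iff (N : ℕ) (x y : Fin (N+6) → ZMod 2) :
    (spinedCube (N+6)).Adj x y ↔ ∃ i, y = x + sqDelta (N+6) x i := by
  unfold spinedCube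
  rw [SimpleGraph.fromRel_adj]
  constructor
  · rintro ⟨_, h | ⟨i, rfl⟩⟩
    · exact h
    · exact ⟨i, (sq_add_add N y i).symm⟩
  · rintro ⟨i, rfl⟩
    refine ⟨?_, Or.inl ⟨i, rfl⟩⟩
    intro h
    have := congrFun h i
    rw [Pi.add_apply, sqDelta_eq, dvec_self] at this
    simp at this

theorem delta_inj (N : ℕ) (x : Fin (N+6) → ZMod 2) (i k : Fin (N+6))
    (h : x + sqDelta (N+6) x i = x + sqDelta (N+6) x k) : i = k := by
  have h := add_left_cancel h
  have h1 := congrFun h i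
  have h2 := congrFun h k
  simp only [sqDelta_eq, dvec_self] at h1 h2
  rcases lt_trichotomy i k with hl | hl | hl
  · rw [dvec_lt _ _ _ _ _ hl] at h1
    simp at h1
  · exact hl
  · rw [dvec_lt _ _ _ _ _ hl] at h2
    simp at h2

theorem core1 (N k m : ℕ) (hk : k < N+6) (hm : m < N+6)
    (h : ∀ j < N+6, dvec (N+6) 0 1 (N+5) j + dvec (N+6) 0 0 k j
      = dvec (N+6) 0 1 (N+2) j + dvec (N+6) 0 1 m j) : k = N+5 ∨ m = N+2 := by
  by_contra! hc
  have h5 := h (N+5) (by omega)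
  rw [dvec_last _ _ _ _ hk, dvec_last _ _ _ _ hm] at h5
  have hm5 : m = N+5 := by
    unfold dvec at h5
    grind
  subst hm5
  have h2 := h (N+2) (by omega)
  have h3 := h (N+3) (by omega)
  unfold dvec at h2 h3
  grind

theorem min_lt (N k m : ℕ) (a b a' b' : ZMod 2)
    (h : dvec (N+6) a b k (min k m) = dvec (N+6) a' b' m (min k m)) : k = m := by
  rcases lt_trichotomy k m with hl | hl | hl
  · rw [min_eq_left hl.le, dvec_lt _ _ _ _ _ hl, dvec_self] at h
    simp at h
  · exact hl
  · rw [min_eq_right hl.le, dvec_lt _ _ _ _ _ hl, dvec_self] at h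
    simp at h

theorem core2 (N k m : ℕ) (hk : k < N+6) (hm : m < N+6)
    (h : ∀ j < N+6, dvec (N+6) 0 1 (N+4) j + dvec (N+6) 1 1 k j
      = dvec (N+6) 0 1 (N+1) j + dvec (N+6) 0 1 m j) : k = N+4 ∨ m = N+1 := by
  by_contra! hc
  have hmin : N + 1 ≤ min k m := by
    by_contra! hlt
    have h0 := h (min k m) (by omega)
    rw [dvec_lt _ _ _ _ _ hlt, dvec_lt _ _ _ (N+4) _ (by omega), zero_add, zero_add] at h0
    have := min_lt _ _ _ _ _ _ _ h0
    subst this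
    have h1 := h (k+1) (by omega)
    have h2 := h (N+3) (by omega)
    unfold dvec at h1 h2
    grind
  have h1 := h (N+1) (by omega)
  have h2 := h (N+2) (by omega)
  have h3 := h (N+3) (by omega)
  have h4 := h (N+4) (by omega)
  have h5 := h (N+5) (by omega)
  clear h
  have hk' : k = N+1 := by
    unfold dvec at h1
    grind
  subst hk'
  unfold dvec at h1 h2 h3 h4 h5
  grind

theorem core3 (N k m : ℕ) (hk : k < N+6) (hm : m < N+6)
    (h : ∀ j < N+6, dvec (N+6) 0 1 0 j + dvec (N+6) 0 1 k j
      = dvec (N+6) 0 1 (N+3) j + dvec (N+6) 1 1 m j) : k = 0 ∨ m = N+3 := by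
  by_contra! hc
  have h0 := h 0 (by omega)
  have hm0 : m = 0 := by
    unfold dvec at h0
    grind
  subst hm0
  have h1 := h 1 (by omega)
  have hk1 : k = 1 := by
    unfold dvec at h1
    grind
  subst hk1
  have h3 := h (N+4) (by omega)
  unfold dvec at h3
  grind

theorem nonlink (N : ℕ) (v : Fin (N+6) → ZMod 2) (p q : Fin (N+6))
    (hcore : ∀ k m : Fin (N+6),
      (∀ j, sqDelta (N+6) v p j + sqDelta (N+6) (v + sqDelta (N+6) v p) k j =
        sqDelta (N+6) v q j + sqDelta (N+6) (v + sqDelta (N+6) v q) m j) → k = p ∨ m = q)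
    (w : Fin (N+6) → ZMod 2)
    (h1 : (spinedCube (N+6)).Adj (v + sqDelta (N+6) v p) w)
    (h2 : (spinedCube (N+6)).Adj (v + sqDelta (N+6) v q) w) : w = v := by
  rw [adj_iff] at h1 h2
  obtain ⟨k, rfl⟩ := h1
  obtain ⟨m, hm⟩ := h2
  have := hcore k m (fun j => by
    have := congrFun hm j
    simp only [Pi.add_apply, add_assoc] at this
    exact add_left_cancel this)
  rcases this with rfl | rfl
  · exact sq_add_add N v k
  · rw [hm]
    exact sq_add_add N v m

/-- The vertex `0⋯001`. -/
def v1 (N : ℕ) : Fin (N+6) → ZMod 2 := fun j => if j.val = N+5 then 1 else 0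

theorem link0 (N : ℕ) (p q : Fin (N+6)) (hpq : p ≠ q) (hp : p.val < N+4) (hq : q.val < N+4) :
    ∃ w, w ≠ 0 ∧ (spinedCube (N+6)).Adj (0 + sqDelta (N+6) 0 p) w ∧
      (spinedCube (N+6)).Adj (0 + sqDelta (N+6) 0 q) w := by
  have key : ∀ p q : Fin (N+6), p.val < N+4 → q.val < N+4 →
      sqDelta (N+6) (0 + sqDelta (N+6) 0 p) q = sqDelta (N+6) 0 q := by
    intro p q hp hq
    funext j
    simp only [sqDelta_eq, Pi.add_apply, dvec_last N _ _ _ p.isLt, dvec_a N _ _ _ p.isLt,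
      Pi.zero_apply]
    have h4 : ¬ p.val = N + 4 := by omega
    have h5 : ¬ p.val = N + 5 := by omega
    simp [h4, h5]
  refine ⟨0 + sqDelta (N+6) 0 p + sqDelta (N+6) 0 q, ?_, ?_, ?_⟩
  · intro h
    apply hpq
    apply delta_inj N 0
    rw [zero_add] at h ⊢
    rw [zero_add]
    have : sqDelta (N+6) 0 p + sqDelta (N+6) 0 q = sqDelta (N+6) 0 q + sqDelta (N+6) 0 q := by
      rw [h, add_self_z]
    exact add_right_cancel this
  · rw [adj_iff]
    exact ⟨q, by rw [key p q hp hq]⟩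
  · rw [adj_iff]
    exact ⟨p, by rw [key q p hq hp]; abel⟩

/-- For `n ≥ 6`, the spined cube `SQ_n` is not vertex-transitive. -/
theorem spinedCube_not_vertexTransitive (n : ℕ) (hn : 6 ≤ n) :
    ¬ ∀ u v : Fin n → ZMod 2, ∃ e : spinedCube n ≃g spinedCube n, e u = v := by
  obtain ⟨N, rfl⟩ := Nat.exists_eq_add_of_le' hn
  intro H
  obtain ⟨e, he⟩ := H (v1 N) 0
  -- images of the neighbours of `v1` are neighbours of `0`
  have hex : ∀ p, ∃ i, e (v1 N + sqDelta (N+6) (v1 N) p) = 0 + sqDelta (N+6) 0 i := by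
    intro p
    rw [← adj_iff, ← he, e.map_adj_iff, adj_iff]
    exact ⟨p, rfl⟩
  choose f hf using hex
  have finj : ∀ p q, f p = f q → p = q := by
    intro p q h
    apply delta_inj N (v1 N)
    apply e.injective
    rw [hf, hf, h]
  have main : ∀ p q : Fin (N+6), p ≠ q → (∀ k m : Fin (N+6),
      (∀ j, sqDelta (N+6) (v1 N) p j + sqDelta (N+6) (v1 N + sqDelta (N+6) (v1 N) p) k j =
        sqDelta (N+6) (v1 N) q j + sqDelta (N+6) (v1 N + sqDelta (N+6) (v1 N) q) m j) →
        k = p ∨ m = q) → N + 4 ≤ (f p).val ∨ N + 4 ≤ (f q).val := by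
    intro p q hpq hcore
    by_contra! hc
    obtain ⟨w, hw, h1, h2⟩ := link0 N (f p) (f q) (fun h => hpq (finj _ _ h)) hc.1 hc.2
    rw [← hf, ← e.apply_symm_apply w, e.map_adj_iff] at h1 h2
    have := nonlink N (v1 N) p q hcore _ h1 h2
    apply hw
    rw [← he, ← this, e.apply_symm_apply]
  have c1 := main ⟨N+5, by omega⟩ ⟨N+2, by omega⟩ (by simp) (by
    intro k m h
    simp only [Fin.ext_iff]
    apply core1 N k m k.isLt m.isLt
    intro j hj
    have := h ⟨j, hj⟩
    simpa [sqDelta_eq, v1, dvec_last, dvec_a, CharTwo.add_self_eq_zero] using this)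
  have c2 := main ⟨N+4, by omega⟩ ⟨N+1, by omega⟩ (by simp) (by
    intro k m h
    simp only [Fin.ext_iff]
    apply core2 N k m k.isLt m.isLt
    intro j hj
    have := h ⟨j, hj⟩
    simpa [sqDelta_eq, v1, dvec_last, dvec_a, CharTwo.add_self_eq_zero] using this)
  have c3 := main ⟨0, by omega⟩ ⟨N+3, by omega⟩ (by simp) (by
    intro k m h
    simp only [Fin.ext_iff]
    apply core3 N k m k.isLt m.isLt
    intro j hj
    have := h ⟨j, hj⟩
    simpa [sqDelta_eq, v1, dvec_last, dvec_a, CharTwo.add_self_eq_zero] using this)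
  have ne : ∀ p q : Fin (N+6), p.val ≠ q.val → (f p).val ≠ (f q).val := by
    intro p q h h'
    exact h (congrArg Fin.val (finj p q (Fin.ext h')))
  have lt : ∀ p : Fin (N+6), (f p).val < N + 6 := fun p => (f p).isLt
  have pig : ∀ p q r : Fin (N+6), p.val ≠ q.val → p.val ≠ r.val → q.val ≠ r.val →
      N + 4 ≤ (f p).val → N + 4 ≤ (f q).val → N + 4 ≤ (f r).val → False := by
    intro p q r h1 h2 h3 _ _ _
    have := ne _ _ h1
    have := ne _ _ h2
    have := ne _ _ h3
    have := lt p
    have := lt q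
    have := lt r
    omega
  rcases c1 with c1 | c1 <;> rcases c2 with c2 | c2 <;> rcases c3 with c3 | c3 <;>
    exact pig _ _ _ (by simp) (by simp) (by simp) c1 c2 c3
end
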